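/- Let L be a finite-dimensional solvable Leibniz algebra over a field F such that every two-generated proper subalgebra of L is strongly solvable. Then L is either strongly solvable or two-generated. -/

import Mathlib

/-!
Basic theory of (left) Leibniz algebras, formalized over an arbitrary field `F`.
A Leibniz algebra structure on an `F`-vector space `L` is given by a bilinear
multiplication `m : L →ₗ[F] L →ₗ[F] L` satisfying the left Leibniz identity.
-/

open Submodule Module

section LeibnizDefs

variable {F : Type*} [Field F] {L : Type*} [AddCommGroup L] [Module F L]
variable (m : L →ₗ[F] L →ₗ[F] L)

/-- The left Leibniz identity: `a(bc) = (ab)c + b(ac)`. -/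
def IsLeibniz : Prop :=
  ∀ a b c : L, m a (m b c) = m (m a b) c + m b (m a c)

/-- The multiplication is antisymmetric, i.e. the algebra is a Lie algebra. -/
def IsLie : Prop := ∀ a b : L, m a b = - m b a

/-- The product of two subspaces: the span of all products `x·y`, `x ∈ P`, `y ∈ Q`. -/
abbrev mprod (P Q : Submodule F L) : Submodule F L := Submodule.map₂ m P Q

/-- A subalgebra: a subspace closed under multiplication. -/
def IsSubalg (S : Submodule F L) : Prop := ∀ x ∈ S, ∀ y ∈ S, m x y ∈ S

/-- An ideal of `L`: a subspace `I` with `L·I ⊆ I` and `I·L ⊆ I`. -/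
def IsIdeal (I : Submodule F L) : Prop :=
  ∀ (x : L), ∀ y ∈ I, m x y ∈ I ∧ m y x ∈ I

/-- An ideal `I` of a subalgebra `S`. -/
def IsIdealOf (S I : Submodule F L) : Prop :=
  I ≤ S ∧ ∀ x ∈ S, ∀ y ∈ I, m x y ∈ I ∧ m y x ∈ I

/-- A minimal ideal: a nonzero ideal containing no nonzero proper subideal of `L`. -/
def IsMinIdeal (A : Submodule F L) : Prop :=
  IsIdeal m A ∧ A ≠ ⊥ ∧ ∀ J, IsIdeal m J → J ≤ A → J = ⊥ ∨ J = A

/-- The derived series of a subspace: `S^(0) = S`, `S^(n+1) = S^(n)·S^(n)`. -/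
def derSeries (S : Submodule F L) : ℕ → Submodule F L
  | 0 => S
  | n + 1 => mprod m (derSeries S n) (derSeries S n)

/-- A subalgebra is solvable if its derived series reaches `0`. -/
def IsSolvableSub (S : Submodule F L) : Prop := ∃ n, derSeries m S n = ⊥

/-- The Leibniz algebra `L` is solvable. -/
abbrev IsSolvableAlg : Prop := IsSolvableSub m (⊤ : Submodule F L)

/-- The lower central series of a subspace: `N^1 = N`, `N^(k+1) = N·N^k`. -/
def lcSeries (N : Submodule F L) : ℕ → Submodule F L
  | 0 => N
  | k + 1 => mprod m N (lcSeries N k)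

/-- A subalgebra is nilpotent if its lower central series reaches `0`. -/
def IsNilpotentSub (N : Submodule F L) : Prop := ∃ k, lcSeries m N k = ⊥

/-- A subalgebra `S` is strongly solvable if `S² = S·S` is nilpotent. -/
def IsStronglySolvable (S : Submodule F L) : Prop :=
  IsNilpotentSub m (mprod m S S)

/-- A maximal subalgebra: a proper subalgebra not contained in any larger proper
subalgebra. -/
def IsMaxSubalg (S : Submodule F L) : Prop :=
  IsSubalg m S ∧ S ≠ ⊤ ∧ ∀ T, IsSubalg m T → S ≤ T → T = S ∨ T = ⊤

/-- The Frattini subalgebra `F(L)`: the intersection of all maximal subalgebras. -/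
def frattiniSub : Submodule F L := sInf {S | IsMaxSubalg m S}

/-- The Frattini ideal `φ(L)`: the largest ideal contained in the Frattini
subalgebra. -/
def frattiniIdeal : Submodule F L :=
  sSup {I | IsIdeal m I ∧ I ≤ frattiniSub m}

/-- `Leib(L)`: the span of all squares `x·x`. -/
def leibIdeal : Submodule F L := Submodule.span F {z | ∃ x : L, z = m x x}

/-- The subalgebra generated by a set. -/
def genBy (s : Set L) : Submodule F L := sInf {S | IsSubalg m S ∧ s ⊆ S}

/-- A subalgebra is two-generated if it is generated as an algebra by two elements. -/
def TwoGenerated (S : Submodule F L) : Prop := ∃ x y : L, genBy m {x, y} = S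

/-- A subalgebra `S` is supersolvable if there is a chain of ideals of `S`,
`0 = S₀ ⊂ S₁ ⊂ ⋯ ⊂ Sₙ = S`, with `dim Sᵢ = i`. -/
def IsSupersolvable (S : Submodule F L) : Prop :=
  ∃ (n : ℕ) (c : ℕ → Submodule F L), c 0 = ⊥ ∧ c n = S ∧
    (∀ i, i < n → c i ≤ c (i + 1)) ∧
    (∀ i, i ≤ n → IsIdealOf m S (c i)) ∧
    (∀ i, i ≤ n → Module.finrank F (c i) = i)

/-- A subspace `S` is nil on `L` if left multiplication by each of its elements is a
nilpotent operator. -/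
def IsNilOn (S : Submodule F L) : Prop :=
  ∀ x ∈ S, IsNilpotent (m x : Module.End F L)

open scoped TensorProduct in
/-- A subspace `S` is triangulable on `L` if, after extending scalars to the algebraic
closure `K` of `F`, the space `K ⊗ L` admits a basis with respect to which the left
multiplication operators by all elements of `K ⊗ S` are upper triangular matrices.
(Since upper triangular matrices form a `K`-subspace of matrices, it suffices that the
base-changed left multiplication by each `x ∈ S` is upper triangular.) -/
def IsTriangulableOn (S : Submodule F L) : Prop :=
  ∃ (n : ℕ) (b : Basis (Fin n) (AlgebraicClosure F) ((AlgebraicClosure F) ⊗[F] L)),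
    ∀ x ∈ S, ∀ i j : Fin n, j < i →
      LinearMap.toMatrix b b (LinearMap.baseChange (AlgebraicClosure F) (m x)) i j = 0

end LeibnizDefs

/-!
Write `f` for the left multiplication by a product `xy`. If `L` is not two-generated, `x` and `y`
lie in a proper, hence strongly solvable, subalgebra, so some power of `f` kills both `x` and `y`.
Now let the pair vary: let `V` be the Fitting one-component of `f`, and let `J` be
an ideal with `V·V ⊆ J`. If `V ⊄ J`, then counting dimensions in `V × V → V`, `(b, a) ↦ xb + ay`,
gives `a, b ∈ V`, not both in `J`, with `(x + a)(y + b) ≡ xy` modulo `J`. So modulo `J` some power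
of `f` kills `x + a` and `y + b`, hence `a` and `b`; but `f` is injective on `V` modulo `J`.
Thus `V` descends through the derived series, and `V = 0` because `L` is solvable: every left
multiplication by a product is nilpotent. As `[L_a, L_b] = L_{ab}`, these operators form a bracket
closed set, and Jacobson's theorem on weakly closed sets makes `L²` nilpotent.
-/

section IdemSemiring

variable {K : Type*} [IdemSemiring K] {x s c : K}

lemma pow_mul_le_mul_pow (h : c * x ≤ x * c) (n : ℕ) : c ^ n * x ≤ x * c ^ n := by
  induction n with
  | zero => simp
  | succ n ih =>
    calc c ^ (n + 1) * x = c ^ n * (c * x) := by rw [pow_succ, mul_assoc]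
      _ ≤ c ^ n * (x * c) := by gcongr
      _ = c ^ n * x * c := by rw [mul_assoc]
      _ ≤ x * c ^ n * c := by gcongr
      _ = x * c ^ (n + 1) := by rw [pow_succ, mul_assoc]

lemma mul_pow_le_pow_mul_pow (h : c * x ≤ x * c) (n : ℕ) : (x * c) ^ n ≤ x ^ n * c ^ n := by
  induction n with
  | zero => simp
  | succ n ih =>
    calc (x * c) ^ (n + 1) = (x * c) ^ n * (x * c) := pow_succ _ _
      _ ≤ x ^ n * c ^ n * (x * c) := by gcongr
      _ = x ^ n * (c ^ n * x) * c := by simp only [mul_assoc]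
      _ ≤ x ^ n * (x * c ^ n) * c := by grw [pow_mul_le_mul_pow h n]
      _ = x ^ (n + 1) * c ^ (n + 1) := by simp only [pow_succ, mul_assoc]

lemma add_pow_le_pow_add_mul_pow (hx : x ≤ c) (hs : s ≤ c) (hc : 1 ≤ c) (hcx : c * x ≤ x * c)
    (n : ℕ) : (x + s) ^ n ≤ s ^ n + x * c ^ n := by
  induction n with
  | zero => simp
  | succ n ih =>
    have hsc : s ^ n ≤ c ^ (n + 1) := (pow_le_pow_left' hs n).trans (pow_le_pow_right' hc n.le_succ)
    have hcxc : (x + s) * x * c ^ n ≤ x * c ^ (n + 1) := by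
      grw [add_le hx hs, hcx, mul_assoc, ← pow_succ']
    calc (x + s) ^ (n + 1) = (x + s) * (x + s) ^ n := pow_succ' _ _
      _ ≤ (x + s) * (s ^ n + x * c ^ n) := by gcongr
      _ = s ^ (n + 1) + x * s ^ n + (x + s) * x * c ^ n := by
        rw [mul_add, add_mul, pow_succ', mul_assoc, add_comm (x * _)]
      _ ≤ s ^ (n + 1) + x * c ^ (n + 1) + x * c ^ (n + 1) := by gcongr
      _ = s ^ (n + 1) + x * c ^ (n + 1) := by rw [add_assoc, add_idem]

theorem isNilpotent_add_of_mul_le (hx : IsNilpotent x) (hs : IsNilpotent s)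
    (h : s * x ≤ x * s + x) : IsNilpotent (x + s) := by
  obtain ⟨p, hp⟩ := hx
  obtain ⟨q, hq⟩ := hs
  -- Adding `1` turns the hypothesis into `c * x ≤ x * c`, so all factors `x` can be moved left.
  set c := x + s + 1 with hc
  have hcx : c * x ≤ x * c := by
    calc c * x = x * x + s * x + x := by rw [hc, add_mul, add_mul, one_mul]
      _ ≤ x * x + (x * s + x) + x := by gcongr
      _ = x * c := by rw [hc, mul_add, mul_add, mul_one, ← add_assoc, add_assoc _ x x, add_idem]
  have hxc : (x + s) ^ q ≤ x * c ^ q := by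
    have hxsc : x + s ≤ c := hc ▸ le_self_add
    have h1c : 1 ≤ c := hc ▸ le_add_self
    simpa only [hq, zero_add] using add_pow_le_pow_add_mul_pow
      (le_self_add.trans hxsc) (le_add_self.trans hxsc) h1c hcx q
  refine ⟨q * p, le_antisymm ?_ zero_le⟩
  calc (x + s) ^ (q * p) = ((x + s) ^ q) ^ p := pow_mul _ _ _
    _ ≤ (x * c ^ q) ^ p := pow_le_pow_left' hxc p
    _ ≤ x ^ p * (c ^ q) ^ p := mul_pow_le_pow_mul_pow (pow_mul_le_mul_pow hcx q) p
    _ = 0 := by rw [hp, zero_mul]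

end IdemSemiring

section Jacobson

variable {R A : Type*} [CommRing R] [Ring A] [Algebra R A] {S : Set A} {X : Submodule R A}

lemma isNilpotent_sup_span_singleton {a : A} (hX : IsNilpotent X) (ha : IsNilpotent a)
    (h : ∀ x ∈ X, ⁅a, x⁆ ∈ X) : IsNilpotent (X ⊔ span R {a}) := by
  obtain ⟨n, hn⟩ := ha
  refine isNilpotent_add_of_mul_le hX ⟨n, ?_⟩ ?_
  · simp [span_pow, hn]
  · refine mul_le.2 fun y hy x hx ↦ ?_
    obtain ⟨r, rfl⟩ := mem_span_singleton.1 hy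
    have hcomm : r • a * x = x * (r • a) + r • ⁅a, x⁆ := by
      simp [Ring.lie_def, smul_sub]
    rw [hcomm]
    exact add_mem_sup (mul_mem_mul hx hy) (X.smul_mem r (h x hx))

lemma exists_notMem_forall_lie_mem (hS : ∀ a ∈ S, ∀ b ∈ S, ⁅a, b⁆ ∈ S) (hX : IsNilpotent X)
    (hSX : ¬ S ⊆ X) : ∃ a ∈ S, a ∉ X ∧ ∀ x ∈ S ∩ X, ⁅a, x⁆ ∈ X := by
  -- `ad Y = XY + YX` is nilpotent, so bracketing with elements of `X` cannot avoid `X` forever.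
  let ad : Module.End ℕ (Submodule R A) := LinearMap.mulLeft ℕ X + LinearMap.mulRight ℕ X
  obtain ⟨n, hn⟩ : IsNilpotent ad :=
    (LinearMap.commute_mulLeft_right X X).isNilpotent_add
      ((LinearMap.isNilpotent_mulLeft_iff ℕ X).2 hX)
      ((LinearMap.isNilpotent_mulRight_iff ℕ X).2 hX)
  by_contra! hstep
  have hall (k : ℕ) : ∃ a ∈ S, a ∉ X ∧ a ∈ (ad ^ k) ⊤ := by
    induction k with
    | zero =>
      obtain ⟨a, haS, haX⟩ := Set.not_subset.1 hSX
      exact ⟨a, haS, haX, trivial⟩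
    | succ k ih =>
      obtain ⟨a, haS, haX, hak⟩ := ih
      obtain ⟨x, ⟨hxS, hxX⟩, hlie⟩ := hstep a haS haX
      refine ⟨⁅a, x⁆, hS a haS x hxS, hlie, ?_⟩
      rw [pow_succ', Module.End.mul_apply, Ring.lie_def, sub_eq_neg_add]
      exact add_mem_sup (neg_mem (mul_mem_mul hxX hak)) (mul_mem_mul hak hxX)
  obtain ⟨a, -, haX, ha⟩ := hall n
  rw [hn, LinearMap.zero_apply, zero_eq_bot, mem_bot] at ha
  exact haX (ha ▸ X.zero_mem)

/-- Jacobson's theorem on weakly closed sets, in the bracket-closed case. -/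
theorem isNilpotent_span_of_forall_lie_mem [IsNoetherian R A]
    (hnil : ∀ a ∈ S, IsNilpotent a) (hS : ∀ a ∈ S, ∀ b ∈ S, ⁅a, b⁆ ∈ S) :
    IsNilpotent (span R S) := by
  obtain ⟨X, -, ⟨hX, hXS⟩, hmax⟩ := exists_maximal_ge_of_wellFoundedGT
    (fun X : Submodule R A ↦ IsNilpotent X ∧ X ≤ span R (S ∩ X)) ⊥ ⟨IsNilpotent.zero, bot_le⟩
  suffices hSX : S ⊆ X by
    rwa [le_antisymm (span_le.2 hSX) (hXS.trans (span_mono Set.inter_subset_left))]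
  by_contra hSX
  obtain ⟨a, haS, haX, hlie⟩ := exists_notMem_forall_lie_mem hS hX hSX
  have hnorm : X ≤ X.comap (LinearMap.mulLeft R a - LinearMap.mulRight R a) :=
    hXS.trans (span_le.2 hlie)
  refine haX (hmax ⟨isNilpotent_sup_span_singleton hX (hnil a haS) hnorm, ?_⟩ le_sup_left
    (mem_sup_right (mem_span_singleton_self a)))
  refine sup_le (hXS.trans (span_mono ?_)) (span_mono ?_)
  · exact Set.inter_subset_inter_right S (SetLike.coe_subset_coe.2 le_sup_left)
  · exact Set.singleton_subset_iff.2 ⟨haS, mem_sup_right (mem_span_singleton_self a)⟩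

end Jacobson

section Fitting

variable {R M : Type*} [Ring R] [AddCommGroup M] [Module R M] {f : Module.End R M}

/-- The Fitting one-component of an endomorphism: the part of the module on which the endomorphism
acts bijectively when the module has finite length. -/
def fittingOne (f : Module.End R M) : Submodule R M := ⨅ n : ℕ, LinearMap.range (f ^ n)

lemma le_fittingOne_of_le_map {W : Submodule R M} (h : W ≤ W.map f) : W ≤ fittingOne f := by
  refine le_iInf fun n ↦ ?_
  induction n with
  | zero => simp [Module.End.one_eq_id]
  | succ n ih =>
    calc W ≤ W.map f := h
      _ ≤ (LinearMap.range (f ^ n)).map f := map_mono ih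
      _ = LinearMap.range (f ^ (n + 1)) := by
        rw [pow_succ', Module.End.mul_eq_comp, LinearMap.range_comp]

lemma exists_fittingOne_eq_range_pow [IsArtinian R M] (f : Module.End R M) :
    ∃ n, ∀ k ≥ n, fittingOne f = LinearMap.range (f ^ k) :=
  Filter.eventually_atTop.1 f.eventually_iInf_range_pow_eq

lemma map_fittingOne [IsArtinian R M] (f : Module.End R M) :
    (fittingOne f).map f = fittingOne f := by
  obtain ⟨n, hn⟩ := exists_fittingOne_eq_range_pow f
  conv_lhs => rw [hn n le_rfl]
  rw [hn (n + 1) n.le_succ, pow_succ', Module.End.mul_eq_comp, LinearMap.range_comp]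

lemma isNilpotent_of_fittingOne_eq_bot [IsArtinian R M] (h : fittingOne f = ⊥) :
    IsNilpotent f := by
  obtain ⟨n, hn⟩ := exists_fittingOne_eq_range_pow f
  exact ⟨n, LinearMap.range_eq_bot.1 (hn n le_rfl ▸ h)⟩

lemma mem_of_pow_apply_mem_of_mem_fittingOne [IsArtinian R M] [IsNoetherian R M]
    {J : Submodule R M} (hJ : J ≤ J.comap f) {k : ℕ} {v : M} (hv : v ∈ fittingOne f)
    (hk : (f ^ k) v ∈ J) : v ∈ J := by
  let fJ := J.mapQ J f hJ
  have hker : J.mkQ v ∈ ⨆ n : ℕ, LinearMap.ker (fJ ^ n) := by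
    refine mem_iSup_of_mem k ?_
    rw [LinearMap.mem_ker, ← mapQ_pow]
    simpa using hk
  have hfix : (fittingOne f).map J.mkQ ≤ ((fittingOne f).map J.mkQ).map fJ := by
    rw [← map_comp, mapQ_mkQ, map_comp, map_fittingOne]
  have hrange : J.mkQ v ∈ fittingOne fJ := le_fittingOne_of_le_map hfix (mem_map_of_mem hv)
  simpa using fJ.isCompl_iSup_ker_pow_iInf_range_pow.disjoint.le_bot ⟨hker, hrange⟩

lemma apply_mem_fittingOne_of_commutator_mem [IsArtinian R M] {g : Module.End R M}
    (hg : ∀ v ∈ fittingOne f, g (f v) - f (g v) ∈ fittingOne f) :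
    ∀ v ∈ fittingOne f, g v ∈ fittingOne f := by
  obtain ⟨W, hW⟩ : ∃ W, W = fittingOne f ⊔ (fittingOne f).map g := ⟨_, rfl⟩
  have hfW : fittingOne f ≤ W.map f :=
    (map_fittingOne f).ge.trans (map_mono (hW ▸ le_sup_left))
  have hgW (v) (hv : v ∈ fittingOne f) : g v ∈ W := hW ▸ mem_sup_right (mem_map_of_mem hv)
  have hfix : W ≤ W.map f := by
    conv_lhs => rw [hW]
    refine sup_le hfW ?_
    rintro _ ⟨v, hv, rfl⟩
    obtain ⟨u, hu, rfl⟩ := (map_fittingOne f).ge hv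
    rw [← sub_add_cancel (g (f u)) (f (g u))]
    exact add_mem (hfW (hg u hu)) (mem_map_of_mem (hgW u hu))
  exact fun v hv ↦ le_fittingOne_of_le_map hfix (hgW v hv)

lemma exists_apply_mem_of_ne_top {F V : Type*} [DivisionRing F] [AddCommGroup V] [Module F V]
    [FiniteDimensional F V] (T : V × V →ₗ[F] V) {p : Submodule F V} (hp : p ≠ ⊤) :
    ∃ u : V × V, T u ∈ p ∧ ¬ (u.1 ∈ p ∧ u.2 ∈ p) := by
  obtain ⟨s, hs⟩ := p.mkQ.exists_rightInverse_of_surjective p.range_mkQ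
  have : Nontrivial (V ⧸ p) := Submodule.Quotient.nontrivial_iff.2 hp
  obtain ⟨w, hw, hw0⟩ := exists_mem_ne_zero_of_ne_bot
    (LinearMap.ker_ne_bot_of_finrank_lt (f := p.mkQ ∘ₗ T ∘ₗ s.prodMap s) (by
      rw [finrank_prod]
      exact Nat.lt_add_of_pos_left finrank_pos))
  refine ⟨s.prodMap s w, by simpa using hw, fun hu ↦ hw0 ?_⟩
  have hmk (a : V ⧸ p) (ha : s a ∈ p) : a = 0 := by
    calc a = p.mkQ (s a) := (LinearMap.congr_fun hs a).symm
      _ = 0 := by simpa using ha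
  exact Prod.ext (hmk _ hu.1) (hmk _ hu.2)

end Fitting

section Leibniz

variable {F : Type*} [Field F] {L : Type*} [AddCommGroup L] [Module F L]
variable {m : L →ₗ[F] L →ₗ[F] L}

lemma isSubalg_genBy (s : Set L) : IsSubalg m (genBy m s) := fun a ha b hb ↦
  mem_sInf.2 fun S hS ↦ hS.1 a (mem_sInf.1 ha S hS) b (mem_sInf.1 hb S hS)

lemma subset_genBy (s : Set L) : s ⊆ genBy m s := fun _ ha ↦
  mem_sInf.2 fun _ hS ↦ hS.2 ha

lemma mprod_eq_map_smul (P Q : Submodule F L) : mprod m P Q = P.map m • Q :=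
  le_antisymm (map₂_le.2 fun _ hp _ hq ↦ smul_mem_smul (mem_map_of_mem hp) hq) <|
    smul_le.2 <| by
      rintro _ ⟨p, hp, rfl⟩ q hq
      exact apply_mem_map₂ m hp hq

lemma lcSeries_eq_pow_smul (N : Submodule F L) (n : ℕ) :
    lcSeries m N n = N.map m ^ n • N := by
  induction n with
  | zero => exact (Submodule.one_smul N).symm
  | succ n ih =>
    rw [lcSeries, ih, mprod_eq_map_smul, pow_succ', ← smul_eq_mul, Submodule.smul_assoc]

lemma isNilpotentSub_of_isNilpotent_map {N : Submodule F L} (h : IsNilpotent (N.map m)) :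
    IsNilpotentSub m N := by
  obtain ⟨n, hn⟩ := h
  exact ⟨n, by rw [lcSeries_eq_pow_smul, hn, zero_eq_bot, bot_smul]⟩

lemma pow_apply_mem_lcSeries {N : Submodule F L} {c z : L} (hc : c ∈ N) (hz : z ∈ N) (n : ℕ) :
    ((m c : End F L) ^ n) z ∈ lcSeries m N n := by
  rw [lcSeries_eq_pow_smul]
  exact smul_mem_smul (pow_mem_pow _ (mem_map_of_mem hc) n) hz

lemma IsLeibniz.lie_eq (hm : IsLeibniz m) (a b : L) : ⁅(m a : End F L), m b⁆ = m (m a b) := by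
  ext c
  simp [Ring.lie_def, hm a b c]

theorem isStronglySolvable_of_isNilpotent [FiniteDimensional F L] (hm : IsLeibniz m)
    {S : Submodule F L} (hS : IsSubalg m S)
    (hnil : ∀ a ∈ S, ∀ b ∈ S, IsNilpotent (m (m a b) : End F L)) : IsStronglySolvable m S := by
  refine isNilpotentSub_of_isNilpotent_map ?_
  rw [mprod, map₂_eq_span_image2, map_span]
  refine isNilpotent_span_of_forall_lie_mem ?_ ?_
  · rintro _ ⟨_, ⟨a, ha, b, hb, rfl⟩, rfl⟩
    exact hnil a ha b hb
  · rintro _ ⟨_, ⟨a, ha, b, hb, rfl⟩, rfl⟩ _ ⟨_, ⟨c, hc, d, hd, rfl⟩, rfl⟩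
    exact ⟨_, ⟨m a b, hS a ha b hb, m c d, hS c hc d hd, rfl⟩, (hm.lie_eq _ _).symm⟩

/-- Two elements `x` and `y` form an Engel pair if some power of the left multiplication by `xy`
kills both of them. -/
def IsEngelPair (m : L →ₗ[F] L →ₗ[F] L) (x y : L) : Prop :=
  ∃ k : ℕ, ((m (m x y) : End F L) ^ k) x = 0 ∧ ((m (m x y) : End F L) ^ k) y = 0

lemma IsStronglySolvable.isEngelPair {S : Submodule F L} (h : IsStronglySolvable m S)
    (hS : IsSubalg m S) {x y : L} (hx : x ∈ S) (hy : y ∈ S) : IsEngelPair m x y := by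
  obtain ⟨k, hk⟩ := h
  have hkill (z : L) (hz : z ∈ S) : ((m (m x y) : End F L) ^ (k + 1)) z = 0 := by
    have hxy : m x y ∈ mprod m S S := apply_mem_map₂ m hx hy
    have hmem := pow_apply_mem_lcSeries (m := m) hxy (apply_mem_map₂ m (hS x hx y hy) hz) k
    rwa [hk, mem_bot] at hmem
  exact ⟨k + 1, hkill x hx, hkill y hy⟩

lemma IsIdeal.mprod_self (hm : IsLeibniz m) {I : Submodule F L} (hI : IsIdeal m I) :
    IsIdeal m (mprod m I I) := by
  intro x
  have hleft : mprod m I I ≤ (mprod m I I).comap (m x) := by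
    refine map₂_le.2 fun a ha b hb ↦ ?_
    rw [mem_comap, hm]
    exact add_mem (apply_mem_map₂ m (hI x a ha).1 hb) (apply_mem_map₂ m ha (hI x b hb).1)
  have hright : mprod m I I ≤ (mprod m I I).comap (m.flip x) := by
    refine map₂_le.2 fun a ha b hb ↦ ?_
    have hab : m (m a b) x = m a (m b x) - m b (m a x) := by rw [hm a b x]; abel
    rw [mem_comap, LinearMap.flip_apply, hab]
    exact sub_mem (apply_mem_map₂ m ha (hI x b hb).2) (apply_mem_map₂ m hb (hI x a ha).2)
  exact fun y hy ↦ ⟨hleft hy, hright hy⟩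

lemma isIdeal_derSeries (hm : IsLeibniz m) (n : ℕ) : IsIdeal m (derSeries m ⊤ n) := by
  induction n with
  | zero => exact fun _ _ _ ↦ ⟨trivial, trivial⟩
  | succ n ih => exact ih.mprod_self hm

lemma IsIdeal.pow_apply_sub_pow_apply_mem {J : Submodule F L} (hJ : IsIdeal m J) {c d : L}
    (hcd : c - d ∈ J) (k : ℕ) (v : L) :
    ((m c : End F L) ^ k) v - ((m d : End F L) ^ k) v ∈ J := by
  induction k with
  | zero => simp
  | succ k ih =>
    have hstep : ((m c : End F L) ^ (k + 1)) v - ((m d : End F L) ^ (k + 1)) v =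
        m c (((m c : End F L) ^ k) v - ((m d : End F L) ^ k) v) +
          m (c - d) (((m d : End F L) ^ k) v) := by
      simp [pow_succ']
    rw [hstep]
    exact add_mem (hJ c _ ih).1 (hJ _ _ hcd).2

lemma apply_mem_fittingOne_of_pow_apply_eq_zero [FiniteDimensional F L] {f : End F L}
    (hf : ∀ a b, f (m a b) = m (f a) b + m a (f b)) {k : ℕ} {z : L} (hz : (f ^ k) z = 0) :
    ∀ v ∈ fittingOne f, m z v ∈ fittingOne f := by
  induction k generalizing z with
  | zero => simp_all
  | succ k ih =>
    refine apply_mem_fittingOne_of_commutator_mem fun v hv ↦ ?_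
    have hcomm : m z (f v) - f (m z v) = - m (f z) v := by rw [hf]; abel
    rw [hcomm]
    exact neg_mem (ih hz v hv)

lemma IsEngelPair.mem_of_add {x y a b : L} {J : Submodule F L}
    (hxy : IsEngelPair m x y) (hadd : IsEngelPair m (x + a) (y + b)) (hJ : IsIdeal m J)
    (hcongr : m (x + a) (y + b) - m x y ∈ J) :
    ∃ k : ℕ, ((m (m x y) : End F L) ^ k) a ∈ J ∧ ((m (m x y) : End F L) ^ k) b ∈ J := by
  obtain ⟨k, hkx, hky⟩ := hxy
  obtain ⟨j, hjx, hjy⟩ := hadd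
  let f : End F L := m (m x y)
  have hpow {z u : L} (hz : (f ^ k) z = 0)
      (hzu : ((m (m (x + a) (y + b)) : End F L) ^ j) (z + u) = 0) : (f ^ (k + j)) u ∈ J := by
    have hmod : (f ^ j) (z + u) ∈ J := by
      have hsub := hJ.pow_apply_sub_pow_apply_mem hcongr j (z + u)
      rwa [hzu, zero_sub, neg_mem_iff] at hsub
    have hf : J ≤ J.comap (f ^ k) := le_comap_pow_of_le_comap J (fun v hv ↦ (hJ _ v hv).1) k
    have hu : (f ^ (k + j)) u = (f ^ k) ((f ^ j) (z + u)) := by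
      have hzk : (f ^ k) ((f ^ j) z) = 0 := by
        rw [← Module.End.mul_apply, pow_mul_comm, Module.End.mul_apply, hz, map_zero]
      rw [map_add, map_add, hzk, zero_add, pow_add, Module.End.mul_apply]
    exact hu ▸ hf hmod
  exact ⟨k + j, hpow hkx hjx, hpow hky hjy⟩

theorem fittingOne_le_of_mprod_le [FiniteDimensional F L] (hm : IsLeibniz m)
    (hE : ∀ x y, IsEngelPair m x y) {J : Submodule F L} (hJ : IsIdeal m J) (x y : L)
    (hVJ : mprod m (fittingOne (m (m x y))) (fittingOne (m (m x y))) ≤ J) :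
    fittingOne (m (m x y)) ≤ J := by
  obtain ⟨f, hf⟩ : ∃ f : End F L, f = m (m x y) := ⟨_, rfl⟩
  rw [← hf] at hVJ ⊢
  obtain ⟨k, hkx, hky⟩ := hE x y
  rw [← hf] at hkx hky
  have hx : ∀ v ∈ fittingOne f, m x v ∈ fittingOne f :=
    apply_mem_fittingOne_of_pow_apply_eq_zero (fun a b ↦ hf ▸ hm _ a b) hkx
  have hy : ∀ v ∈ fittingOne f, m v y ∈ fittingOne f :=
    apply_mem_fittingOne_of_pow_apply_eq_zero (m := m.flip)
      (fun a b ↦ by simp only [LinearMap.flip_apply, hf, hm _ b a, add_comm]) hky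
  by_contra hle
  let T : fittingOne f × fittingOne f →ₗ[F] fittingOne f :=
    ((m x).restrict hx).coprod ((m.flip y).restrict hy)
  obtain ⟨⟨b, a⟩, hT, hba⟩ := exists_apply_mem_of_ne_top T
    (p := J.comap (fittingOne f).subtype) (by simpa [comap_subtype_eq_top] using hle)
  have hab : m x b + m a y ∈ J := hT
  have hcongr : m (x + a) (y + b) - m x y ∈ J := by
    have hexp : m (x + a) (y + b) - m x y = m x b + m a y + m a b := by
      simp only [map_add, LinearMap.add_apply]; abel
    rw [hexp]
    exact add_mem hab (hVJ (apply_mem_map₂ m a.2 b.2))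
  obtain ⟨n, hna, hnb⟩ := (hE x y).mem_of_add (hE (x + a) (y + b)) hJ hcongr
  rw [← hf] at hna hnb
  have hfJ : J ≤ J.comap f := fun v hv ↦ hf ▸ (hJ _ v hv).1
  exact hba ⟨mem_of_pow_apply_mem_of_mem_fittingOne hfJ b.2 hnb,
    mem_of_pow_apply_mem_of_mem_fittingOne hfJ a.2 hna⟩

theorem isNilpotent_mul_of_isEngelPair [FiniteDimensional F L] (hm : IsLeibniz m)
    (hsolv : IsSolvableAlg m) (hE : ∀ x y, IsEngelPair m x y) (x y : L) :
    IsNilpotent (m (m x y) : End F L) := by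
  obtain ⟨n, hn⟩ := hsolv
  have hle (i : ℕ) : fittingOne (m (m x y)) ≤ derSeries m ⊤ i := by
    induction i with
    | zero => exact le_top
    | succ i ih =>
      exact fittingOne_le_of_mprod_le hm hE (isIdeal_derSeries hm (i + 1)) x y (map₂_le_map₂ ih ih)
  exact isNilpotent_of_fittingOne_eq_bot (eq_bot_mono (hle n) hn)

end Leibniz

/-- Let `L` be a finite-dimensional solvable Leibniz algebra such that
every two-generated proper subalgebra of `L` is strongly solvable. Then `L` is either
strongly solvable or two-generated. -/
theorem strongly_solvable_or_two_generated
    {F : Type*} [Field F] {L : Type*} [AddCommGroup L] [Module F L]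
    [FiniteDimensional F L]
    (m : L →ₗ[F] L →ₗ[F] L) (hm : IsLeibniz m)
    (hsolv : IsSolvableAlg m)
    (h2gen : ∀ S : Submodule F L, IsSubalg m S → S ≠ ⊤ → TwoGenerated m S →
      IsStronglySolvable m S) :
    IsStronglySolvable m (⊤ : Submodule F L) ∨ ∃ x y : L, genBy m {x, y} = ⊤ := by
  by_cases h : ∃ x y : L, genBy m {x, y} = ⊤
  · exact Or.inr h
  have hE (x y : L) : IsEngelPair m x y := by
    have hsub : IsSubalg m (genBy m {x, y}) := isSubalg_genBy {x, y}
    have hss : IsStronglySolvable m (genBy m {x, y}) :=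
      h2gen _ hsub (fun htop ↦ h ⟨x, y, htop⟩) ⟨x, y, rfl⟩
    have hxy : {x, y} ⊆ (genBy m {x, y} : Set L) := subset_genBy {x, y}
    exact hss.isEngelPair hsub (hxy (by simp)) (hxy (by simp))
  exact Or.inl <| isStronglySolvable_of_isNilpotent hm (fun _ _ _ _ ↦ trivial)
    fun x _ y _ ↦ isNilpotent_mul_of_isEngelPair hm hsolv hE x y
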